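/- The union of σ-rational lines is dense in ℝ². -/

import Mathlib

open Set

noncomputable section

def hmap (σ : ℝ ≃ ℝ) : (ℝ × ℝ) ≃ (ℝ × ℝ) where
  toFun p := (p.1 + σ.symm p.2, p.2)
  invFun p := (p.1 - σ.symm p.2, p.2)
  left_inv p := by simp
  right_inv p := by simp

def vmap (σ : ℝ ≃ ℝ) : (ℝ × ℝ) ≃ (ℝ × ℝ) where
  toFun p := (p.1, p.2 + σ p.1)
  invFun p := (p.1, p.2 - σ p.1)
  left_inv p := by simp
  right_inv p := by simp

def Xset : Set (ℝ × ℝ) := {p | p ≠ 0 ∧ 0 ≤ p.1 * p.2 ∧ p.1 ≠ 0}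
def Yset : Set (ℝ × ℝ) := {p | p ≠ 0 ∧ p.1 * p.2 ≤ 0 ∧ p.2 ≠ 0}
def Omeg : Set (ℝ × ℝ) := {p | p ≠ 0}

def ratLines (σ : ℝ ≃ ℝ) : Set (Set (ℝ × ℝ)) :=
  {{p : ℝ × ℝ | p.2 = 0}, {p : ℝ × ℝ | p.1 = 0}} ∪
  ((fun w : Function.End (ℝ × ℝ) => w '' {p : ℝ × ℝ | p.2 = 0}) ''
    ↑(Submonoid.closure {(⇑(hmap σ) : Function.End (ℝ × ℝ)), ⇑(vmap σ)} : Submonoid (Function.End (ℝ × ℝ)))) ∪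
  ((fun w : Function.End (ℝ × ℝ) => w '' {p : ℝ × ℝ | p.1 = 0}) ''
    ↑(Submonoid.closure {(⇑(hmap σ).symm : Function.End (ℝ × ℝ)), ⇑(vmap σ).symm} : Submonoid (Function.End (ℝ × ℝ))))

theorem strictMono_symm {σ : ℝ ≃ ℝ} (hmono : StrictMono σ) : StrictMono σ.symm := by
  intro a b hab
  rw [← hmono.lt_iff_lt]
  simpa using hab

/-- A path whose endpoints lie in the open first quadrant, the last one to the left of and at height
at least `δ` above the first one, meets every set that contains the graph of `σ` and is stable under
`h_σ` and `v_σ`. -/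
theorem exists_mem_of_path {σ : ℝ ≃ ℝ} (hmono : StrictMono σ) (h0 : σ 0 = 0) {L : Set (ℝ × ℝ)}
    (hL : ∀ p ∈ L, hmap σ p ∈ L) (vL : ∀ p ∈ L, vmap σ p ∈ L) (graph : ∀ s, (s, σ s) ∈ L)
    {a b δ : ℝ} (hab : a ≤ b) (hδ : 0 < δ) (N : ℕ) :
    ∀ (M : ℕ) (f g : ℝ → ℝ), Continuous f → Continuous g → 0 < f b → f b ≤ f a → 0 < g a →
      g a + δ ≤ g b → f b < N * σ.symm δ → g b < M * σ (f b) →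
      ∃ t ∈ Icc a b, (f t, g t) ∈ L := by
  have hσ : Continuous σ := hmono.monotone.continuous_of_surjective σ.surjective
  have hmono' := strictMono_symm hmono
  have hσ' : Continuous σ.symm := hmono'.monotone.continuous_of_surjective σ.symm.surjective
  induction N with
  | zero =>
    intro M f g _ _ hfb _ _ _ hN
    simp at hN
    linarith
  | succ N ihN =>
    intro M
    induction M with
    | zero =>
      intro f g _ _ _ _ hga hg _ hM
      simp at hM
      linarith
    | succ M ihM =>
      intro f g hf hg hfb hfa hga hgab hN hM
      have hσf : σ (f b) ≤ σ (f a) := hmono.monotone hfa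
      have crossing : (∃ t ∈ Icc a b, g t = σ (f t)) → ∃ t ∈ Icc a b, (f t, g t) ∈ L := by
        rintro ⟨t, ht, h⟩
        exact ⟨t, ht, h ▸ graph (f t)⟩
      rcases le_or_gt (g a) (σ (f a)) with ha | ha
      · rcases le_or_gt (σ (f b)) (g b) with hb | hb
        · obtain ⟨t, ht, h⟩ := intermediate_value_Icc hab
            (f := fun t => g t - σ (f t)) (by fun_prop)
            (show (0 : ℝ) ∈ Icc _ _ from ⟨by simpa using ha, by simpa using hb⟩)
          exact crossing ⟨t, ht, sub_eq_zero.1 h⟩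
        · have hb' : σ.symm (g b) < f b := by simpa using hmono' hb
          have hδb : σ.symm δ ≤ σ.symm (g b) := hmono'.monotone (by linarith)
          have hgab' : σ.symm (g a) ≤ σ.symm (g b) := hmono'.monotone (by linarith)
          have hpos : 0 < σ (f b - σ.symm (g b)) := by
            rw [← h0]; exact hmono (by linarith)
          obtain ⟨K, hK⟩ := exists_nat_gt (g b / σ (f b - σ.symm (g b)))
          rw [div_lt_iff₀ hpos] at hK
          obtain ⟨t, ht, h⟩ := ihN K (fun t => f t - σ.symm (g t)) g (by fun_prop) hg
            (by linarith) (by linarith) hga hgab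
            (by push_cast at hN; linarith) hK
          exact ⟨t, ht, by simpa [hmap] using hL _ h⟩
      · obtain ⟨t, ht, h⟩ := ihM f (fun t => g t - σ (f t)) hf (by fun_prop) hfb hfa
          (by linarith) (by linarith) hN (by push_cast at hM; linarith)
        exact ⟨t, ht, by simpa [vmap] using vL _ h⟩

theorem mem_closure_of_pos {σ : ℝ ≃ ℝ} (hmono : StrictMono σ) (h0 : σ 0 = 0) {L : Set (ℝ × ℝ)}
    (hL : ∀ p ∈ L, hmap σ p ∈ L) (vL : ∀ p ∈ L, vmap σ p ∈ L) (graph : ∀ s, (s, σ s) ∈ L)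
    {x y : ℝ} (hx : 0 < x) (hy : 0 < y) : (x, y) ∈ closure L := by
  rw [Metric.mem_closure_iff]
  intro ε hε
  have hδ : 0 < σ.symm (ε / 2) := by
    rw [← hmono.lt_iff_lt]; simp [h0, hε]
  have hσx : 0 < σ x := h0 ▸ hmono hx
  obtain ⟨N, hN⟩ := exists_nat_gt (x / σ.symm (ε / 2))
  obtain ⟨M, hM⟩ := exists_nat_gt ((y + ε / 2) / σ x)
  rw [div_lt_iff₀ hδ] at hN
  rw [div_lt_iff₀ hσx] at hM
  obtain ⟨t, ht, h⟩ := exists_mem_of_path hmono h0 hL vL graph (a := y) (b := y + ε / 2)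
    (by linarith) (half_pos hε) N M (fun _ => x) id continuous_const continuous_id hx le_rfl hy
    le_rfl hN hM
  refine ⟨_, h, ?_⟩
  rw [dist_comm, Prod.dist_eq, dist_self, Real.dist_eq, id, abs_of_nonneg (by linarith [ht.1])]
  exact max_lt hε (by linarith [ht.2])

/-- Images of the points of `A` under the monoid generated by `f` and `g` are stable under
each generator. -/
theorem exists_mem_closure_pair_apply {α : Type*} {f g k : Function.End α} {A : Set α}
    (hk : k ∈ ({f, g} : Set (Function.End α))) {p : α}
    (hp : p ∈ {p | ∃ w ∈ Submonoid.closure {f, g}, p ∈ w '' A}) :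
    k p ∈ {p | ∃ w ∈ Submonoid.closure {f, g}, p ∈ w '' A} := by
  obtain ⟨w, hw, q, hq, rfl⟩ := hp
  exact ⟨k * w, mul_mem (Submonoid.subset_closure hk) hw, q, hq, rfl⟩

/-- The union of the σ-rational lines is dense in ℝ². -/
theorem stmt_6 (σ : ℝ ≃ ℝ) (hmono : StrictMono σ) (hodd : ∀ x : ℝ, σ (-x) = -σ x) :
    Dense (⋃₀ ratLines σ) := by
  have h0 : σ 0 = 0 := by
    have := hodd 0
    rw [neg_zero] at this
    linarith
  have hodd' : ∀ x : ℝ, σ.symm (-x) = -σ.symm x := fun x => by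
    rw [Equiv.symm_apply_eq, hodd, Equiv.apply_symm_apply]
  set P : Set (ℝ × ℝ) := {p | ∃ w ∈ (Submonoid.closure
    {(⇑(hmap σ) : Function.End (ℝ × ℝ)), ⇑(vmap σ)} : Submonoid (Function.End (ℝ × ℝ))),
      p ∈ w '' {p : ℝ × ℝ | p.2 = 0}}
  set Q : Set (ℝ × ℝ) := {p | ∃ w ∈ (Submonoid.closure
    {(⇑(hmap σ).symm : Function.End (ℝ × ℝ)), ⇑(vmap σ).symm} :
      Submonoid (Function.End (ℝ × ℝ))), p ∈ w '' {p : ℝ × ℝ | p.1 = 0}}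
  have hPS : P ⊆ ⋃₀ ratLines σ := fun p ⟨w, hw, hp⟩ => ⟨_, .inl (.inr ⟨w, hw, rfl⟩), hp⟩
  have hQS : Q ⊆ ⋃₀ ratLines σ := fun p ⟨w, hw, hp⟩ => ⟨_, .inr ⟨w, hw, rfl⟩, hp⟩
  have Ph : ∀ p ∈ P, hmap σ p ∈ P := fun p hp => exists_mem_closure_pair_apply (.inl rfl) hp
  have Pv : ∀ p ∈ P, vmap σ p ∈ P := fun p hp => exists_mem_closure_pair_apply (.inr rfl) hp
  have Qh : ∀ p ∈ Q, (hmap σ).symm p ∈ Q :=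
    fun p hp => exists_mem_closure_pair_apply (.inl rfl) hp
  have Qv : ∀ p ∈ Q, (vmap σ).symm p ∈ Q :=
    fun p hp => exists_mem_closure_pair_apply (.inr rfl) hp
  have Pgraph : ∀ s, (s, σ s) ∈ P := fun s => by
    simpa [vmap] using Pv (s, 0) ⟨1, one_mem _, (s, 0), rfl, rfl⟩
  have Qgraph : ∀ s, (-s, σ s) ∈ Q := fun s => by
    simpa [hmap] using Qh (0, σ s) ⟨1, one_mem _, (0, σ s), rfl, rfl⟩
  rintro ⟨x, y⟩
  rcases eq_or_ne x 0 with rfl | hx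
  · exact subset_closure ⟨_, .inl (.inl (.inr rfl)), rfl⟩
  rcases eq_or_ne y 0 with rfl | hy
  · exact subset_closure ⟨_, .inl (.inl (.inl rfl)), rfl⟩
  rcases hx.lt_or_gt with hx | hx <;> rcases hy.lt_or_gt with hy | hy
  · have key := mem_closure_of_pos hmono h0 (L := {p | (-p.1, -p.2) ∈ P})
      (fun p hp => by simpa [hmap, hodd', add_comm] using Ph _ hp)
      (fun p hp => by simpa [vmap, hodd, add_comm] using Pv _ hp)
      (fun s => by simpa [hodd] using Pgraph (-s)) (neg_pos.2 hx) (neg_pos.2 hy)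
    simpa using map_mem_closure (f := fun p : ℝ × ℝ => (-p.1, -p.2)) (by fun_prop) key
      fun p hp => hPS hp
  · have key := mem_closure_of_pos hmono h0 (L := {p | (-p.1, p.2) ∈ Q})
      (fun p hp => by simpa [hmap, add_comm, sub_eq_add_neg] using Qh _ hp)
      (fun p hp => by simpa [vmap, hodd] using Qv _ hp)
      (fun s => Qgraph s) (neg_pos.2 hx) hy
    simpa using map_mem_closure (f := fun p : ℝ × ℝ => (-p.1, p.2)) (by fun_prop) key
      fun p hp => hQS hp
  · have key := mem_closure_of_pos hmono h0 (L := {p | (p.1, -p.2) ∈ Q})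
      (fun p hp => by simpa [hmap, hodd'] using Qh _ hp)
      (fun p hp => by simpa [vmap, add_comm, sub_eq_add_neg] using Qv _ hp)
      (fun s => by simpa [hodd] using Qgraph (-s)) hx (neg_pos.2 hy)
    simpa using map_mem_closure (f := fun p : ℝ × ℝ => (p.1, -p.2)) (by fun_prop) key
      fun p hp => hQS hp
  · exact closure_mono hPS (mem_closure_of_pos hmono h0 Ph Pv Pgraph hx hy)
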